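/- Let l_1,…,l_n and r_1,…,r_n be d-dimensional bit vectors and let ℓ ≥ 1, p ∈ {0,1}, q ≥ 0 be integers. If some pair l_i, r_j is orthogonal, then the diameter of G = G_{L,R,ℓ,p,q} equals 6ℓ − 3p + q. -/

import Mathlib

namespace GraphOV

/-- Two bit vectors (functions into `Fin 2`) are orthogonal if in every coordinate
at least one of them is `0`. -/
def Orth {d : ℕ} (a b : Fin d → Fin 2) : Prop := ∀ k, a k = 0 ∨ b k = 0

/-- A system of internally disjoint paths joining exterior vertices from `E`:
for each path name `i : ι` we record its two endpoints and its length. -/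
structure PathSys (E : Type) (ι : Type) where
  src : ι → E
  dst : ι → E
  len : ι → ℕ

namespace PathSys

variable {E ι : Type}

/-- Endpoints of zero-length paths get identified. -/
def idRel (S : PathSys E ι) (a b : E) : Prop :=
  ∃ i, S.len i = 0 ∧ S.src i = a ∧ S.dst i = b

/-- Vertices of the glued graph: exterior vertices (up to identification) together
with, for each path of length `m`, fresh interior vertices at positions `1,…,m-1`. -/
def Vert (S : PathSys E ι) : Type :=
  Quot S.idRel ⊕ Σ i : ι, {t : ℕ // 0 < t ∧ t < S.len i}

/-- The vertex corresponding to an exterior vertex. -/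
def ext (S : PathSys E ι) (a : E) : S.Vert := Sum.inl (Quot.mk _ a)

/-- The `t`-th vertex on the path named `i` (for `0 ≤ t ≤ S.len i`). -/
def pt (S : PathSys E ι) (i : ι) (t : ℕ) : S.Vert :=
  if h : 0 < t ∧ t < S.len i then Sum.inr ⟨i, t, h⟩
  else if t = 0 then S.ext (S.src i) else S.ext (S.dst i)

/-- The glued graph: consecutive vertices on each path are adjacent. -/
def graph (S : PathSys E ι) : SimpleGraph S.Vert :=
  SimpleGraph.fromRel fun a b =>
    ∃ i t, t + 1 ≤ S.len i ∧ a = S.pt i t ∧ b = S.pt i (t + 1)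

/-- The set of vertices lying on the path named `i`. -/
def onPath (S : PathSys E ι) (i : ι) : Set S.Vert :=
  {v | ∃ t ≤ S.len i, v = S.pt i t}

/-- A walk in the glued graph contains the path named `i` entirely if all vertices of
that path occur consecutively (in forward or backward order) on the walk. -/
def WalkContainsPath (S : PathSys E ι) {x y : S.Vert} (W : S.graph.Walk x y) (i : ι) : Prop :=
  ∃ a, a + S.len i ≤ W.length ∧
    ((∀ t ≤ S.len i, W.getVert (a + t) = S.pt i t) ∨
     (∀ t ≤ S.len i, W.getVert (a + t) = S.pt i (S.len i - t)))

end PathSys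

/-- The exterior vertices of the graph `G_{L,R,ℓ,p,q}`. -/
inductive Ext (n d : ℕ) : Type
  | uL : Fin n → Ext n d
  | uR : Fin n → Ext n d
  | vL : Fin n → Ext n d
  | vR : Fin n → Ext n d
  | wL : Fin d → Ext n d
  | wR : Fin d → Ext n d
  | xL : Ext n d
  | xR : Ext n d
  | yL : Ext n d
  | yR : Ext n d

/-- Names for the paths of the graph `G_{L,R,ℓ,p,q}`. -/
inductive Idx (n d : ℕ) (l r : Fin n → Fin d → Fin 2) : Type
  | uvL : Fin n → Idx n d l r
  | uvR : Fin n → Idx n d l r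
  | vxL : Fin n → Idx n d l r
  | vxR : Fin n → Idx n d l r
  | vwL : (i : Fin n) → (k : Fin d) → l i k = 1 → Idx n d l r
  | vwR : (j : Fin n) → (k : Fin d) → r j k = 1 → Idx n d l r
  | ywL : Fin d → Idx n d l r
  | ywR : Fin d → Idx n d l r
  | ww : Fin d → Idx n d l r
  | xyL : Idx n d l r
  | xyR : Idx n d l r
  | yy : Idx n d l r

/-- The path system defining the graph `G_{L,R,ℓ,p,q}`. -/
def sys (n d : ℕ) (l r : Fin n → Fin d → Fin 2) (ℓ p q : ℕ) :
    PathSys (Ext n d) (Idx n d l r) where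
  src := fun i => match i with
    | .uvL i => .uL i
    | .uvR i => .uR i
    | .vxL i => .vL i
    | .vxR i => .vR i
    | .vwL i _ _ => .vL i
    | .vwR j _ _ => .vR j
    | .ywL _ => .yL
    | .ywR _ => .yR
    | .ww k => .wL k
    | .xyL => .xL
    | .xyR => .xR
    | .yy => .yL
  dst := fun i => match i with
    | .uvL i => .vL i
    | .uvR i => .vR i
    | .vxL _ => .xL
    | .vxR _ => .xR
    | .vwL _ k _ => .wL k
    | .vwR _ k _ => .wR k
    | .ywL k => .wL k
    | .ywR k => .wR k
    | .ww k => .wR k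
    | .xyL => .yL
    | .xyR => .yR
    | .yy => .yR
  len := fun i => match i with
    | .uvL _ => ℓ - p
    | .uvR _ => ℓ - p
    | .vxL _ => ℓ
    | .vxR _ => ℓ
    | .vwL _ _ _ => ℓ
    | .vwR _ _ _ => ℓ
    | .ywL _ => ℓ
    | .ywR _ => ℓ
    | .ww _ => q
    | .xyL => ℓ - p
    | .xyR => ℓ - p
    | .yy => p + q

/-- The set `P_i^L`. -/
def PL (n d : ℕ) (l r : Fin n → Fin d → Fin 2) (ℓ p q : ℕ) (i : Fin n) :
    Set (sys n d l r ℓ p q).Vert :=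
  (sys n d l r ℓ p q).onPath (.uvL i) ∪
    ((sys n d l r ℓ p q).onPath (.vxL i) \ {(sys n d l r ℓ p q).ext .xL}) ∪
    ⋃ (k : Fin d) (h : l i k = 1),
      ((sys n d l r ℓ p q).onPath (.vwL i k h) \ {(sys n d l r ℓ p q).ext (.wL k)})

/-- The set `P_j^R`. -/
def PR (n d : ℕ) (l r : Fin n → Fin d → Fin 2) (ℓ p q : ℕ) (j : Fin n) :
    Set (sys n d l r ℓ p q).Vert :=
  (sys n d l r ℓ p q).onPath (.uvR j) ∪
    ((sys n d l r ℓ p q).onPath (.vxR j) \ {(sys n d l r ℓ p q).ext .xR}) ∪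
    ⋃ (k : Fin d) (h : r j k = 1),
      ((sys n d l r ℓ p q).onPath (.vwR j k h) \ {(sys n d l r ℓ p q).ext (.wR k)})

/-- The set `V^L`. -/
def VL (n d : ℕ) (l r : Fin n → Fin d → Fin 2) (ℓ p q : ℕ) :
    Set (sys n d l r ℓ p q).Vert := ⋃ i : Fin n, PL n d l r ℓ p q i

/-- The set `V^R`. -/
def VR (n d : ℕ) (l r : Fin n → Fin d → Fin 2) (ℓ p q : ℕ) :
    Set (sys n d l r ℓ p q).Vert := ⋃ j : Fin n, PR n d l r ℓ p q j

/-- The set `V^M` of all remaining vertices. -/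
def VM (n d : ℕ) (l r : Fin n → Fin d → Fin 2) (ℓ p q : ℕ) :
    Set (sys n d l r ℓ p q).Vert := (VL n d l r ℓ p q ∪ VR n d l r ℓ p q)ᶜ

namespace PathSys

variable {E ι : Type}

lemma pt_zero (S : PathSys E ι) (i : ι) : S.pt i 0 = S.ext (S.src i) := by
  simp [pt]

lemma pt_len (S : PathSys E ι) (i : ι) : S.pt i (S.len i) = S.ext (S.dst i) := by
  by_cases h : S.len i = 0
  · rw [h, pt_zero]
    exact congrArg Sum.inl (Quot.sound ⟨i, h, rfl, rfl⟩)
  · simp [pt, h]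

lemma edist_pt (S : PathSys E ι) (i : ι) (s m : ℕ) (h : s + m ≤ S.len i) :
    S.graph.edist (S.pt i s) (S.pt i (s + m)) ≤ (m : ℕ∞) := by
  induction m with
  | zero => simp
  | succ m ih =>
    refine le_trans (SimpleGraph.edist_triangle (v := S.pt i (s + m))) ?_
    push_cast
    refine add_le_add (ih (by omega)) ?_
    by_cases he : S.pt i (s + m) = S.pt i (s + (m + 1))
    · rw [he]; simp
    · have hadj : S.graph.Adj (S.pt i (s + m)) (S.pt i (s + (m + 1))) := by
        rw [graph, SimpleGraph.fromRel_adj]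
        exact ⟨he, Or.inl ⟨i, s + m, by omega, rfl, rfl⟩⟩
      exact (SimpleGraph.edist_eq_one_iff_adj.2 hadj).le

lemma edist_src (S : PathSys E ι) (i : ι) (t : ℕ) (h : t ≤ S.len i) :
    S.graph.edist (S.pt i t) (S.ext (S.src i)) ≤ (t : ℕ∞) := by
  have := S.edist_pt i 0 t (by omega)
  rw [Nat.zero_add, pt_zero] at this
  rwa [SimpleGraph.edist_comm]

lemma edist_dst (S : PathSys E ι) (i : ι) (t : ℕ) (h : t ≤ S.len i) :
    S.graph.edist (S.pt i t) (S.ext (S.dst i)) ≤ ((S.len i - t : ℕ) : ℕ∞) := by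
  have := S.edist_pt i t (S.len i - t) (by omega)
  rwa [Nat.add_sub_cancel' h, pt_len] at this

lemma edist_ends (S : PathSys E ι) (i : ι) :
    S.graph.edist (S.ext (S.src i)) (S.ext (S.dst i)) ≤ (S.len i : ℕ∞) := by
  have := S.edist_dst i 0 (by omega)
  rwa [pt_zero, Nat.sub_zero] at this

lemma edist_le_trans (S : PathSys E ι) {a b c : S.Vert} {m k : ℕ} (N : ℕ)
    (h1 : S.graph.edist a b ≤ (m : ℕ∞)) (h2 : S.graph.edist b c ≤ (k : ℕ∞)) (h : m + k ≤ N) :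
    S.graph.edist a c ≤ (N : ℕ∞) := by
  refine le_trans SimpleGraph.edist_triangle (le_trans (add_le_add h1 h2) ?_)
  exact_mod_cast h

/-- Potential function extended to all vertices. -/
def pot (S : PathSys E ι) (φ : E → ℤ)
    (h : ∀ i, φ (S.src i) ≤ φ (S.dst i) + S.len i ∧ φ (S.dst i) ≤ φ (S.src i) + S.len i) :
    S.Vert → ℤ
  | .inl a => Quot.lift φ (by
      rintro a b ⟨i, h0, rfl, rfl⟩
      have := h i
      rw [h0] at this
      push_cast at this
      omega) a
  | .inr ⟨i, t, _⟩ => min (φ (S.src i) + t) (φ (S.dst i) + S.len i - t)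

lemma pot_pt (S : PathSys E ι) (φ : E → ℤ)
    (h : ∀ i, φ (S.src i) ≤ φ (S.dst i) + S.len i ∧ φ (S.dst i) ≤ φ (S.src i) + S.len i)
    (i : ι) (t : ℕ) (ht : t ≤ S.len i) :
    S.pot φ h (S.pt i t) = min (φ (S.src i) + t) (φ (S.dst i) + S.len i - t) := by
  have hi := h i
  by_cases h1 : 0 < t ∧ t < S.len i
  · simp [pt, h1, pot]
  · by_cases h2 : t = 0
    · subst h2
      rw [pt_zero]
      change φ (S.src i) = _
      push_cast; omega
    · have : t = S.len i := by omega
      subst this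
      rw [pt_len]
      change φ (S.dst i) = _
      omega

lemma pot_adj (S : PathSys E ι) (φ : E → ℤ)
    (h : ∀ i, φ (S.src i) ≤ φ (S.dst i) + S.len i ∧ φ (S.dst i) ≤ φ (S.src i) + S.len i)
    {a b : S.Vert} (hab : S.graph.Adj a b) : S.pot φ h b ≤ S.pot φ h a + 1 := by
  rw [graph, SimpleGraph.fromRel_adj] at hab
  obtain ⟨_, ⟨i, t, ht, rfl, rfl⟩ | ⟨i, t, ht, rfl, rfl⟩⟩ := hab
  all_goals
    rw [pot_pt _ _ _ _ _ ht, pot_pt _ _ _ _ _ (by omega)]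
    push_cast
    omega

lemma pot_walk (S : PathSys E ι) (φ : E → ℤ)
    (h : ∀ i, φ (S.src i) ≤ φ (S.dst i) + S.len i ∧ φ (S.dst i) ≤ φ (S.src i) + S.len i)
    {a b : S.Vert} (w : S.graph.Walk a b) : S.pot φ h b ≤ S.pot φ h a + w.length := by
  induction w with
  | nil => simp
  | cons hab w ih =>
    have := S.pot_adj φ h hab
    rw [SimpleGraph.Walk.length_cons]
    push_cast
    omega

lemma le_edist_of_pot (S : PathSys E ι) (φ : E → ℤ)
    (h : ∀ i, φ (S.src i) ≤ φ (S.dst i) + S.len i ∧ φ (S.dst i) ≤ φ (S.src i) + S.len i)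
    (a b : E) (N : ℕ) (hN : φ a + N ≤ φ b) :
    (N : ℕ∞) ≤ S.graph.edist (S.ext a) (S.ext b) := by
  refine le_iInf fun w => ?_
  have := S.pot_walk φ h w
  change φ b ≤ φ a + w.length at this
  have : N ≤ w.length := by omega
  exact_mod_cast this

end PathSys

/-- The potential. -/
def phi {n d : ℕ} (l r : Fin n → Fin d → Fin 2) (ℓ p q : ℤ) (i j : Fin n) : Ext n d → ℤ
  | .uL a => if a = i then 0 else 3 * ℓ - p
  | .vL a => if a = i then ℓ - p else 3 * ℓ - p
  | .uR a => if a = j then 6 * ℓ - 3 * p + q else 3 * ℓ - 2 * p + q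
  | .vR a => if a = j then 5 * ℓ - 2 * p + q else 3 * ℓ - 2 * p + q
  | .xL => 2 * ℓ - p
  | .yL => 3 * ℓ - 2 * p
  | .xR => 4 * ℓ - 2 * p + q
  | .yR => 3 * ℓ - p + q
  | .wL k => if l i k = 1 then 2 * ℓ - p else if r j k = 1 then 4 * ℓ - 2 * p else 3 * ℓ - 2 * p
  | .wR k => (if l i k = 1 then 2 * ℓ - p else if r j k = 1 then 4 * ℓ - 2 * p
      else 3 * ℓ - 2 * p) + q

lemma phi_ok (n d ℓ p q : ℕ) (hℓ : 1 ≤ ℓ) (hp : p ≤ 1) (l r : Fin n → Fin d → Fin 2)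
    (i j : Fin n) (ho : Orth (l i) (r j)) (e : Idx n d l r) :
    phi l r ℓ p q i j ((sys n d l r ℓ p q).src e) ≤
        phi l r ℓ p q i j ((sys n d l r ℓ p q).dst e) + (sys n d l r ℓ p q).len e ∧
      phi l r ℓ p q i j ((sys n d l r ℓ p q).dst e) ≤
        phi l r ℓ p q i j ((sys n d l r ℓ p q).src e) + (sys n d l r ℓ p q).len e := by
  have hc : ((ℓ - p : ℕ) : ℤ) = ℓ - p := by omega
  cases e with
  | vwL a k h =>
    simp only [sys, phi]
    split_ifs with h1 h2 h3 <;> first | (subst h1; contradiction) | omega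
  | vwR a k h =>
    simp only [sys, phi]
    have := ho k
    split_ifs with h1 h2 h3 <;> first | omega | (subst h1; simp_all)
  | _ =>
    simp only [sys, phi]
    try split_ifs
    all_goals (push_cast; omega)

lemma both_bound (n d ℓ p q : ℕ) (hℓ : 1 ≤ ℓ) (hp : p ≤ 1)
    (l r : Fin n → Fin d → Fin 2) (a : (sys n d l r ℓ p q).Vert) :
    ∃ α β : ℕ, (sys n d l r ℓ p q).graph.edist a ((sys n d l r ℓ p q).ext .yL) ≤ (α : ℕ∞) ∧
      (sys n d l r ℓ p q).graph.edist a ((sys n d l r ℓ p q).ext .yR) ≤ (β : ℕ∞) ∧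
      α + β ≤ 6 * ℓ - 3 * p + q := by
  revert a
  set S := sys n d l r ℓ p q with hS
  have yy : S.graph.edist (S.ext .yL) (S.ext .yR) ≤ ((p + q : ℕ) : ℕ∞) := S.edist_ends .yy
  have yy' := yy
  rw [SimpleGraph.edist_comm] at yy'
  have left : ∀ a, S.graph.edist a (S.ext .yL) ≤ ((3 * ℓ - 2 * p : ℕ) : ℕ∞) →
      ∃ α β : ℕ, S.graph.edist a (S.ext .yL) ≤ (α : ℕ∞) ∧
      S.graph.edist a (S.ext .yR) ≤ (β : ℕ∞) ∧ α + β ≤ 6 * ℓ - 3 * p + q := fun a h =>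
    ⟨_, _, h, S.edist_le_trans _ h yy le_rfl, by omega⟩
  have right : ∀ a, S.graph.edist a (S.ext .yR) ≤ ((3 * ℓ - 2 * p : ℕ) : ℕ∞) →
      ∃ α β : ℕ, S.graph.edist a (S.ext .yL) ≤ (α : ℕ∞) ∧
      S.graph.edist a (S.ext .yR) ≤ (β : ℕ∞) ∧ α + β ≤ 6 * ℓ - 3 * p + q := fun a h =>
    ⟨_, _, S.edist_le_trans _ h yy' le_rfl, h, by omega⟩
  have xL : S.graph.edist (S.ext .xL) (S.ext .yL) ≤ ((ℓ - p : ℕ) : ℕ∞) := S.edist_ends .xyL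
  have xR : S.graph.edist (S.ext .xR) (S.ext .yR) ≤ ((ℓ - p : ℕ) : ℕ∞) := S.edist_ends .xyR
  have vL : ∀ i, S.graph.edist (S.ext (.vL i)) (S.ext .yL) ≤ ((2 * ℓ - p : ℕ) : ℕ∞) := fun i =>
    S.edist_le_trans _ (S.edist_ends (.vxL i)) xL (by simp only [hS, sys]; omega)
  have vR : ∀ i, S.graph.edist (S.ext (.vR i)) (S.ext .yR) ≤ ((2 * ℓ - p : ℕ) : ℕ∞) := fun i =>
    S.edist_le_trans _ (S.edist_ends (.vxR i)) xR (by simp only [hS, sys]; omega)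
  have wL : ∀ k, S.graph.edist (S.ext (.wL k)) (S.ext .yL) ≤ (ℓ : ℕ∞) := fun k => by
    rw [SimpleGraph.edist_comm]; exact S.edist_ends (.ywL k)
  have wR : ∀ k, S.graph.edist (S.ext (.wR k)) (S.ext .yR) ≤ (ℓ : ℕ∞) := fun k => by
    rw [SimpleGraph.edist_comm]; exact S.edist_ends (.ywR k)
  have path : ∀ (e : Idx n d l r) (t : ℕ), t ≤ S.len e →
      ∃ α β : ℕ, S.graph.edist (S.pt e t) (S.ext .yL) ≤ (α : ℕ∞) ∧
      S.graph.edist (S.pt e t) (S.ext .yR) ≤ (β : ℕ∞) ∧ α + β ≤ 6 * ℓ - 3 * p + q := by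
    intro e t ht
    have h1 := S.edist_src e t ht
    have h2 := S.edist_dst e t ht
    cases e with
    | uvL i =>
      have ht' : t ≤ ℓ - p := ht
      change _ ≤ ((ℓ - p - t : ℕ) : ℕ∞) at h2
      exact left _ (S.edist_le_trans _ h2 (vL i) (by omega))
    | uvR i =>
      have ht' : t ≤ ℓ - p := ht
      change _ ≤ ((ℓ - p - t : ℕ) : ℕ∞) at h2
      exact right _ (S.edist_le_trans _ h2 (vR i) (by omega))
    | vxL i =>
      change _ ≤ ((ℓ - t : ℕ) : ℕ∞) at h2
      exact left _ (S.edist_le_trans _ h2 xL (by omega))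
    | vxR i =>
      change _ ≤ ((ℓ - t : ℕ) : ℕ∞) at h2
      exact right _ (S.edist_le_trans _ h2 xR (by omega))
    | vwL i k h =>
      have ht' : t ≤ ℓ := ht
      change _ ≤ ((ℓ - t : ℕ) : ℕ∞) at h2
      by_cases hc : t + (2 * ℓ - p) ≤ 3 * ℓ - 2 * p
      · exact left _ (S.edist_le_trans _ h1 (vL i) hc)
      · exact left _ (S.edist_le_trans _ h2 (wL k) (by omega))
    | vwR i k h =>
      have ht' : t ≤ ℓ := ht
      change _ ≤ ((ℓ - t : ℕ) : ℕ∞) at h2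
      by_cases hc : t + (2 * ℓ - p) ≤ 3 * ℓ - 2 * p
      · exact right _ (S.edist_le_trans _ h1 (vR i) hc)
      · exact right _ (S.edist_le_trans _ h2 (wR k) (by omega))
    | ywL k =>
      have ht' : t ≤ ℓ := ht
      exact left _ (h1.trans (by exact_mod_cast (by omega : t ≤ 3 * ℓ - 2 * p)))
    | ywR k =>
      have ht' : t ≤ ℓ := ht
      exact right _ (h1.trans (by exact_mod_cast (by omega : t ≤ 3 * ℓ - 2 * p)))
    | ww k =>
      have ht' : t ≤ q := ht
      change _ ≤ ((q - t : ℕ) : ℕ∞) at h2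
      exact ⟨_, _, S.edist_le_trans _ h1 (wL k) le_rfl, S.edist_le_trans _ h2 (wR k) le_rfl,
        by omega⟩
    | xyL =>
      change _ ≤ ((ℓ - p - t : ℕ) : ℕ∞) at h2
      exact left _ (h2.trans (by exact_mod_cast (by omega : ℓ - p - t ≤ 3 * ℓ - 2 * p)))
    | xyR =>
      change _ ≤ ((ℓ - p - t : ℕ) : ℕ∞) at h2
      exact right _ (h2.trans (by exact_mod_cast (by omega : ℓ - p - t ≤ 3 * ℓ - 2 * p)))
    | yy =>
      have ht' : t ≤ p + q := ht
      change _ ≤ ((p + q - t : ℕ) : ℕ∞) at h2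
      exact ⟨_, _, h1, h2, by omega⟩
  have hsrc := fun e => path e 0 (Nat.zero_le _)
  have hdst := fun e => path e (S.len e) le_rfl
  simp only [PathSys.pt_zero] at hsrc
  simp only [PathSys.pt_len] at hdst
  rintro (a | ⟨e, t, ht⟩)
  · induction a using Quot.ind with
    | mk a =>
      cases a with
      | uL i => exact hsrc (.uvL i)
      | uR i => exact hsrc (.uvR i)
      | vL i => exact hsrc (.vxL i)
      | vR i => exact hsrc (.vxR i)
      | wL k => exact hsrc (.ww k)
      | wR k => exact hdst (.ww k)
      | xL => exact hsrc .xyL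
      | xR => exact hsrc .xyR
      | yL => exact hdst .xyL
      | yR => exact hdst .xyR
  · have := path e t ht.2.le
    have hpt : S.pt e t = Sum.inr ⟨e, t, ht⟩ := dif_pos ht
    rwa [hpt] at this

theorem diameter_of_G_orth_pair (n d ℓ p q : ℕ) (hn : 1 ≤ n) (hd : 1 ≤ d)
    (hℓ : 1 ≤ ℓ) (hp : p ≤ 1) (l r : Fin n → Fin d → Fin 2)
    (horth : ∃ i j, Orth (l i) (r j)) :
    (sys n d l r ℓ p q).graph.diam = 6 * ℓ - 3 * p + q := by
  obtain ⟨i, j, ho⟩ := horth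
  have hup : (sys n d l r ℓ p q).graph.ediam ≤ ((6 * ℓ - 3 * p + q : ℕ) : ℕ∞) := by
    refine SimpleGraph.ediam_le_of_edist_le fun a b => ?_
    obtain ⟨α, β, ha1, ha2, ha⟩ := both_bound n d ℓ p q hℓ hp l r a
    obtain ⟨γ, δ, hb1, hb2, hb⟩ := both_bound n d ℓ p q hℓ hp l r b
    rw [SimpleGraph.edist_comm] at hb1 hb2
    by_cases hc : α + γ ≤ 6 * ℓ - 3 * p + q
    · exact PathSys.edist_le_trans _ _ ha1 hb1 hc
    · exact PathSys.edist_le_trans _ _ ha2 hb2 (by omega)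
  have hlo : ((6 * ℓ - 3 * p + q : ℕ) : ℕ∞) ≤ (sys n d l r ℓ p q).graph.ediam := by
    refine le_trans (PathSys.le_edist_of_pot _ _ (phi_ok n d ℓ p q hℓ hp l r i j ho)
      (.uL i) (.uR j) _ ?_) SimpleGraph.edist_le_ediam
    simp only [phi, if_true]
    omega
  rw [SimpleGraph.diam, le_antisymm hup hlo]
  rfl

end GraphOV
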